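/- In the affine Hecke–Clifford algebra H_n^c(F), define for 1 ≤ j ≤ n−1 the intertwining element Φ_j = s_j(x_j² − x_{j+1}²) + (x_j + x_{j+1}) + c_j c_{j+1}(x_j − x_{j+1}). Then for every 1 ≤ k ≤ n−2: Φ_k Φ_{k+1} Φ_k − Φ_{k+1} Φ_k Φ_{k+1} = (s_k s_{k+1} s_k − s_{k+1} s_k s_{k+1})(x_k² − x_{k+1}²)(x_k² − x_{k+2}²)(x_{k+1}² − x_{k+2}²). -/

import Mathlib

/-- Generators of the affine Hecke–Clifford algebra `H_n^c(F)` (0-indexed):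
`s i` for `i : Fin (n-1)`, and `x i`, `c i` for `i : Fin n`. -/
inductive AHCGen (n : ℕ) : Type
  | s : Fin (n - 1) → AHCGen n
  | x : Fin n → AHCGen n
  | c : Fin n → AHCGen n

/-- The index `i` of the transposition `s i`, as an index in `Fin n`. -/
def idxL {n : ℕ} (i : Fin (n - 1)) : Fin n := ⟨i.val, by have := i.isLt; omega⟩

/-- The index `i + 1`, as an index in `Fin n`. -/
def idxR {n : ℕ} (i : Fin (n - 1)) : Fin n := ⟨i.val + 1, by have := i.isLt; omega⟩

open FreeAlgebra in
/-- The defining relations of the affine Hecke–Clifford algebra `H_n^c(F)`. -/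
inductive AHCRel (F : Type) [Field F] (n : ℕ) :
    FreeAlgebra F (AHCGen n) → FreeAlgebra F (AHCGen n) → Prop
  | s_sq (i : Fin (n - 1)) :
      AHCRel F n (ι F (AHCGen.s i) * ι F (AHCGen.s i)) 1
  | s_comm (i j : Fin (n - 1)) (h : i.val + 1 < j.val ∨ j.val + 1 < i.val) :
      AHCRel F n (ι F (AHCGen.s i) * ι F (AHCGen.s j))
        (ι F (AHCGen.s j) * ι F (AHCGen.s i))
  | braid (i j : Fin (n - 1)) (h : j.val = i.val + 1) :
      AHCRel F n (ι F (AHCGen.s i) * ι F (AHCGen.s j) * ι F (AHCGen.s i))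
        (ι F (AHCGen.s j) * ι F (AHCGen.s i) * ι F (AHCGen.s j))
  | x_comm (i j : Fin n) :
      AHCRel F n (ι F (AHCGen.x i) * ι F (AHCGen.x j))
        (ι F (AHCGen.x j) * ι F (AHCGen.x i))
  | c_sq (i : Fin n) :
      AHCRel F n (ι F (AHCGen.c i) * ι F (AHCGen.c i)) 1
  | c_anticomm (i j : Fin n) (h : i ≠ j) :
      AHCRel F n (ι F (AHCGen.c i) * ι F (AHCGen.c j))
        (-(ι F (AHCGen.c j) * ι F (AHCGen.c i)))
  | s_x (i : Fin (n - 1)) :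
      AHCRel F n (ι F (AHCGen.s i) * ι F (AHCGen.x (idxL i)))
        (ι F (AHCGen.x (idxR i)) * ι F (AHCGen.s i)
          - (1 + ι F (AHCGen.c (idxL i)) * ι F (AHCGen.c (idxR i))))
  | s_x_comm (i : Fin (n - 1)) (j : Fin n) (h1 : j ≠ idxL i) (h2 : j ≠ idxR i) :
      AHCRel F n (ι F (AHCGen.s i) * ι F (AHCGen.x j))
        (ι F (AHCGen.x j) * ι F (AHCGen.s i))
  | s_c1 (i : Fin (n - 1)) :
      AHCRel F n (ι F (AHCGen.s i) * ι F (AHCGen.c (idxL i)))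
        (ι F (AHCGen.c (idxR i)) * ι F (AHCGen.s i))
  | s_c2 (i : Fin (n - 1)) :
      AHCRel F n (ι F (AHCGen.s i) * ι F (AHCGen.c (idxR i)))
        (ι F (AHCGen.c (idxL i)) * ι F (AHCGen.s i))
  | s_c_comm (i : Fin (n - 1)) (j : Fin n) (h1 : j ≠ idxL i) (h2 : j ≠ idxR i) :
      AHCRel F n (ι F (AHCGen.s i) * ι F (AHCGen.c j))
        (ι F (AHCGen.c j) * ι F (AHCGen.s i))
  | x_c_anti (i : Fin n) :
      AHCRel F n (ι F (AHCGen.x i) * ι F (AHCGen.c i))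
        (-(ι F (AHCGen.c i) * ι F (AHCGen.x i)))
  | x_c_comm (i j : Fin n) (h : i ≠ j) :
      AHCRel F n (ι F (AHCGen.x i) * ι F (AHCGen.c j))
        (ι F (AHCGen.c j) * ι F (AHCGen.x i))

/-- The affine Hecke–Clifford algebra `H_n^c(F)`: the quotient of the free
`F`-algebra on the generators by the two-sided ideal generated by the defining
relations. -/
abbrev AHC (F : Type) [Field F] (n : ℕ) := RingQuot (AHCRel F n)

/-- The generator `s i` in `H_n^c(F)`. -/
noncomputable def sE (F : Type) [Field F] (n : ℕ) (i : Fin (n - 1)) : AHC F n :=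
  RingQuot.mkAlgHom F (AHCRel F n) (FreeAlgebra.ι F (AHCGen.s i))

/-- The generator `x i` in `H_n^c(F)`. -/
noncomputable def xE (F : Type) [Field F] (n : ℕ) (i : Fin n) : AHC F n :=
  RingQuot.mkAlgHom F (AHCRel F n) (FreeAlgebra.ι F (AHCGen.x i))

/-- The generator `c i` in `H_n^c(F)`. -/
noncomputable def cE (F : Type) [Field F] (n : ℕ) (i : Fin n) : AHC F n :=
  RingQuot.mkAlgHom F (AHCRel F n) (FreeAlgebra.ι F (AHCGen.c i))

/-- The intertwining element
`Φ_j = s_j(x_j² − x_{j+1}²) + (x_j + x_{j+1}) + c_j c_{j+1}(x_j − x_{j+1})`. -/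
noncomputable def PhiE (F : Type) [Field F] (n : ℕ) (j : Fin (n - 1)) : AHC F n :=
  sE F n j * (xE F n (idxL j) ^ 2 - xE F n (idxR j) ^ 2)
    + (xE F n (idxL j) + xE F n (idxR j))
    + cE F n (idxL j) * cE F n (idxR j) * (xE F n (idxL j) - xE F n (idxR j))

set_option linter.unusedSimpArgs false in
set_option maxHeartbeats 4000000 in
theorem ahc_aux {A : Type} [Ring A] (s t x y z a b c : A)
    (ss : s * s = 1)
    (tt : t * t = 1)
    (br : s * t * s = t * s * t)
    (yx : y * x = x * y)
    (zx : z * x = x * z)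
    (zy : z * y = y * z)
    (aa : a * a = 1)
    (bb : b * b = 1)
    (cc : c * c = 1)
    (ba : b * a = -(a * b))
    (ca : c * a = -(a * c))
    (cb : c * b = -(b * c))
    (sx : s * x = y * s - (1 + a * b))
    (sz : s * z = z * s)
    (ty : t * y = z * t - (1 + b * c))
    (tx : t * x = x * t)
    (sa : s * a = b * s)
    (sb : s * b = a * s)
    (sc : s * c = c * s)
    (tb : t * b = c * t)
    (tc : t * c = b * t)
    (ta : t * a = a * t)
    (xa : x * a = -(a * x))
    (yb : y * b = -(b * y))
    (zc : z * c = -(c * z))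
    (xb : x * b = b * x)
    (xc : x * c = c * x)
    (ya : y * a = a * y)
    (yc : y * c = c * y)
    (za : z * a = a * z)
    (zb : z * b = b * z)
    : (s * (x ^ 2 - y ^ 2) + (x + y) + a * b * (x - y)) * (t * (y ^ 2 - z ^ 2) + (y + z) + b * c * (y - z)) * (s * (x ^ 2 - y ^ 2) + (x + y) + a * b * (x - y)) = (t * (y ^ 2 - z ^ 2) + (y + z) + b * c * (y - z)) * (s * (x ^ 2 - y ^ 2) + (x + y) + a * b * (x - y)) * (t * (y ^ 2 - z ^ 2) + (y + z) + b * c * (y - z)) := by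
  have sy : s * y = x * s + (1 - a * b) := by
    have h : s * (s * x) * s = s * (y * s - (1 + a * b)) * s := by rw [sx]
    have h1 : s * (s * x) * s = x * s := by rw [← mul_assoc, ss, one_mul]
    have h2 : s * (y * s - (1 + a * b)) * s = s * y * (s * s) - (s * s + (s * a) * (b * s)) := by noncomm_ring
    have h3 : (s * a) * (b * s) = -(a * b) := by
      rw [sa, mul_assoc, ← mul_assoc s b s, sb, mul_assoc, ss, mul_one, ba]
    rw [h1, h2, h3, ss] at h
    rw [h]; noncomm_ring
  have tz : t * z = y * t + (1 - b * c) := by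
    have h : t * (t * y) * t = t * (z * t - (1 + b * c)) * t := by rw [ty]
    have h1 : t * (t * y) * t = y * t := by rw [← mul_assoc, tt, one_mul]
    have h2 : t * (z * t - (1 + b * c)) * t = t * z * (t * t) - (t * t + (t * b) * (c * t)) := by noncomm_ring
    have h3 : (t * b) * (c * t) = -(b * c) := by
      rw [tb, mul_assoc, ← mul_assoc t c t, tc, mul_assoc, tt, mul_one, cb]
    rw [h1, h2, h3, tt] at h
    rw [h]; noncomm_ring
  rw [mul_assoc, mul_assoc] at br
  have ss1 : ∀ w, s * (s * w) = w := fun w => by rw [← mul_assoc, ss, one_mul]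
  have tt1 : ∀ w, t * (t * w) = w := fun w => by rw [← mul_assoc, tt, one_mul]
  have br1 : ∀ w, s * (t * (s * w)) = t * (s * (t * w)) := fun w => by
    have := congrArg (· * w) br
    simpa only [mul_assoc] using this
  have yx1 : ∀ w, y * (x * w) = (x * y) * w := fun w => by rw [← mul_assoc, yx]
  have zx1 : ∀ w, z * (x * w) = (x * z) * w := fun w => by rw [← mul_assoc, zx]
  have zy1 : ∀ w, z * (y * w) = (y * z) * w := fun w => by rw [← mul_assoc, zy]
  have aa1 : ∀ w, a * (a * w) = w := fun w => by rw [← mul_assoc, aa, one_mul]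
  have bb1 : ∀ w, b * (b * w) = w := fun w => by rw [← mul_assoc, bb, one_mul]
  have cc1 : ∀ w, c * (c * w) = w := fun w => by rw [← mul_assoc, cc, one_mul]
  have ba1 : ∀ w, b * (a * w) = (-(a * b)) * w := fun w => by rw [← mul_assoc, ba]
  have ca1 : ∀ w, c * (a * w) = (-(a * c)) * w := fun w => by rw [← mul_assoc, ca]
  have cb1 : ∀ w, c * (b * w) = (-(b * c)) * w := fun w => by rw [← mul_assoc, cb]
  have sx1 : ∀ w, s * (x * w) = (y * s - (1 + a * b)) * w := fun w => by rw [← mul_assoc, sx]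
  have sz1 : ∀ w, s * (z * w) = (z * s) * w := fun w => by rw [← mul_assoc, sz]
  have ty1 : ∀ w, t * (y * w) = (z * t - (1 + b * c)) * w := fun w => by rw [← mul_assoc, ty]
  have tx1 : ∀ w, t * (x * w) = (x * t) * w := fun w => by rw [← mul_assoc, tx]
  have sa1 : ∀ w, s * (a * w) = (b * s) * w := fun w => by rw [← mul_assoc, sa]
  have sb1 : ∀ w, s * (b * w) = (a * s) * w := fun w => by rw [← mul_assoc, sb]
  have sc1 : ∀ w, s * (c * w) = (c * s) * w := fun w => by rw [← mul_assoc, sc]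
  have tb1 : ∀ w, t * (b * w) = (c * t) * w := fun w => by rw [← mul_assoc, tb]
  have tc1 : ∀ w, t * (c * w) = (b * t) * w := fun w => by rw [← mul_assoc, tc]
  have ta1 : ∀ w, t * (a * w) = (a * t) * w := fun w => by rw [← mul_assoc, ta]
  have xa1 : ∀ w, x * (a * w) = (-(a * x)) * w := fun w => by rw [← mul_assoc, xa]
  have yb1 : ∀ w, y * (b * w) = (-(b * y)) * w := fun w => by rw [← mul_assoc, yb]
  have zc1 : ∀ w, z * (c * w) = (-(c * z)) * w := fun w => by rw [← mul_assoc, zc]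
  have xb1 : ∀ w, x * (b * w) = (b * x) * w := fun w => by rw [← mul_assoc, xb]
  have xc1 : ∀ w, x * (c * w) = (c * x) * w := fun w => by rw [← mul_assoc, xc]
  have ya1 : ∀ w, y * (a * w) = (a * y) * w := fun w => by rw [← mul_assoc, ya]
  have yc1 : ∀ w, y * (c * w) = (c * y) * w := fun w => by rw [← mul_assoc, yc]
  have za1 : ∀ w, z * (a * w) = (a * z) * w := fun w => by rw [← mul_assoc, za]
  have zb1 : ∀ w, z * (b * w) = (b * z) * w := fun w => by rw [← mul_assoc, zb]
  have sy1 : ∀ w, s * (y * w) = (x * s + (1 - a * b)) * w := fun w => by rw [← mul_assoc, sy]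
  have tz1 : ∀ w, t * (z * w) = (y * t + (1 - b * c)) * w := fun w => by rw [← mul_assoc, tz]
  simp only [pow_two, mul_assoc, mul_add, add_mul, mul_sub, sub_mul, neg_mul, mul_neg, neg_neg, mul_one, one_mul,
    ss, ss1, tt, tt1, br, br1, yx, yx1, zx, zx1, zy, zy1, aa, aa1, bb, bb1, cc, cc1, ba, ba1, ca, ca1, cb, cb1, sx, sx1, sz, sz1, ty, ty1, tx, tx1, sa, sa1, sb, sb1, sc, sc1, tb, tb1, tc, tc1, ta, ta1, xa, xa1, yb, yb1, zc, zc1, xb, xb1, xc, xc1, ya, ya1, yc, yc1, za, za1, zb, zb1, sy, sy1, tz, tz1]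
  abel

theorem ahc_rel {F : Type} [Field F] {n : ℕ} {u v : FreeAlgebra F (AHCGen n)} (h : AHCRel F n u v) :
    RingQuot.mkAlgHom F (AHCRel F n) u = RingQuot.mkAlgHom F (AHCRel F n) v :=
  RingQuot.mkAlgHom_rel F h


/-- in `H_n^c(F)` (char F ≠ 2), for every `k` with `k` and `k+1`
both valid transposition indices,
`Φ_k Φ_{k+1} Φ_k − Φ_{k+1} Φ_k Φ_{k+1}
  = (s_k s_{k+1} s_k − s_{k+1} s_k s_{k+1})(x_k² − x_{k+1}²)(x_k² − x_{k+2}²)(x_{k+1}² − x_{k+2}²)`. -/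
theorem ahc_phi_braid_defect (F : Type) [Field F] (hF : (2 : F) ≠ 0)
    (n : ℕ) (k : ℕ) (hk : k + 2 < n) :
    PhiE F n ⟨k, by omega⟩ * PhiE F n ⟨k + 1, by omega⟩ * PhiE F n ⟨k, by omega⟩
        - PhiE F n ⟨k + 1, by omega⟩ * PhiE F n ⟨k, by omega⟩ * PhiE F n ⟨k + 1, by omega⟩
      = (sE F n ⟨k, by omega⟩ * sE F n ⟨k + 1, by omega⟩ * sE F n ⟨k, by omega⟩
            - sE F n ⟨k + 1, by omega⟩ * sE F n ⟨k, by omega⟩ * sE F n ⟨k + 1, by omega⟩)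
          * ((xE F n ⟨k, by omega⟩ ^ 2 - xE F n ⟨k + 1, by omega⟩ ^ 2)
              * (xE F n ⟨k, by omega⟩ ^ 2 - xE F n ⟨k + 2, by omega⟩ ^ 2)
              * (xE F n ⟨k + 1, by omega⟩ ^ 2 - xE F n ⟨k + 2, by omega⟩ ^ 2)) := by
  have hb : sE F n ⟨k, by omega⟩ * sE F n ⟨k + 1, by omega⟩ * sE F n ⟨k, by omega⟩
      = sE F n ⟨k + 1, by omega⟩ * sE F n ⟨k, by omega⟩ * sE F n ⟨k + 1, by omega⟩ := by
    have h := ahc_rel (F := F) (n := n) (AHCRel.braid ⟨k, by omega⟩ ⟨k + 1, by omega⟩ rfl)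
    simpa only [map_mul, sE] using h
  rw [hb, sub_self, zero_mul, sub_eq_zero]
  refine ahc_aux (sE F n ⟨k, by omega⟩) (sE F n ⟨k + 1, by omega⟩)
    (xE F n ⟨k, by omega⟩) (xE F n ⟨k + 1, by omega⟩) (xE F n ⟨k + 2, by omega⟩)
    (cE F n ⟨k, by omega⟩) (cE F n ⟨k + 1, by omega⟩) (cE F n ⟨k + 2, by omega⟩)
    ?_ ?_ ?_ ?_ ?_ ?_ ?_ ?_ ?_ ?_ ?_ ?_ ?_ ?_ ?_ ?_ ?_ ?_ ?_ ?_ ?_ ?_ ?_ ?_ ?_ ?_ ?_ ?_ ?_ ?_ ?_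
  · have h := ahc_rel (F := F) (n := n) (AHCRel.s_sq (⟨k, by omega⟩ : Fin (n - 1)))
    simpa only [map_mul, map_one, map_neg, map_sub, map_add, sE, xE, cE, idxL, idxR] using h
  · have h := ahc_rel (F := F) (n := n) (AHCRel.s_sq (⟨k + 1, by omega⟩ : Fin (n - 1)))
    simpa only [map_mul, map_one, map_neg, map_sub, map_add, sE, xE, cE, idxL, idxR] using h
  · exact hb
  · have h := ahc_rel (F := F) (n := n) (AHCRel.x_comm (⟨k + 1, by omega⟩ : Fin n) (⟨k, by omega⟩ : Fin n))
    simpa only [map_mul, map_one, map_neg, map_sub, map_add, sE, xE, cE, idxL, idxR] using h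
  · have h := ahc_rel (F := F) (n := n) (AHCRel.x_comm (⟨k + 2, by omega⟩ : Fin n) (⟨k, by omega⟩ : Fin n))
    simpa only [map_mul, map_one, map_neg, map_sub, map_add, sE, xE, cE, idxL, idxR] using h
  · have h := ahc_rel (F := F) (n := n) (AHCRel.x_comm (⟨k + 2, by omega⟩ : Fin n) (⟨k + 1, by omega⟩ : Fin n))
    simpa only [map_mul, map_one, map_neg, map_sub, map_add, sE, xE, cE, idxL, idxR] using h
  · have h := ahc_rel (F := F) (n := n) (AHCRel.c_sq (⟨k, by omega⟩ : Fin n))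
    simpa only [map_mul, map_one, map_neg, map_sub, map_add, sE, xE, cE, idxL, idxR] using h
  · have h := ahc_rel (F := F) (n := n) (AHCRel.c_sq (⟨k + 1, by omega⟩ : Fin n))
    simpa only [map_mul, map_one, map_neg, map_sub, map_add, sE, xE, cE, idxL, idxR] using h
  · have h := ahc_rel (F := F) (n := n) (AHCRel.c_sq (⟨k + 2, by omega⟩ : Fin n))
    simpa only [map_mul, map_one, map_neg, map_sub, map_add, sE, xE, cE, idxL, idxR] using h
  · have h := ahc_rel (F := F) (n := n) (AHCRel.c_anticomm (⟨k + 1, by omega⟩ : Fin n) (⟨k, by omega⟩ : Fin n) (by simp only [ne_eq, Fin.mk.injEq]; omega))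
    simpa only [map_mul, map_one, map_neg, map_sub, map_add, sE, xE, cE, idxL, idxR] using h
  · have h := ahc_rel (F := F) (n := n) (AHCRel.c_anticomm (⟨k + 2, by omega⟩ : Fin n) (⟨k, by omega⟩ : Fin n) (by simp only [ne_eq, Fin.mk.injEq]; omega))
    simpa only [map_mul, map_one, map_neg, map_sub, map_add, sE, xE, cE, idxL, idxR] using h
  · have h := ahc_rel (F := F) (n := n) (AHCRel.c_anticomm (⟨k + 2, by omega⟩ : Fin n) (⟨k + 1, by omega⟩ : Fin n) (by simp only [ne_eq, Fin.mk.injEq]; omega))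
    simpa only [map_mul, map_one, map_neg, map_sub, map_add, sE, xE, cE, idxL, idxR] using h
  · have h := ahc_rel (F := F) (n := n) (AHCRel.s_x (⟨k, by omega⟩ : Fin (n - 1)))
    simpa only [map_mul, map_one, map_neg, map_sub, map_add, sE, xE, cE, idxL, idxR] using h
  · have h := ahc_rel (F := F) (n := n) (AHCRel.s_x_comm (⟨k, by omega⟩ : Fin (n - 1)) (⟨k + 2, by omega⟩ : Fin n) (by simp only [idxL, ne_eq, Fin.mk.injEq]; omega) (by simp only [idxR, ne_eq, Fin.mk.injEq]; omega))
    simpa only [map_mul, map_one, map_neg, map_sub, map_add, sE, xE, cE, idxL, idxR] using h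
  · have h := ahc_rel (F := F) (n := n) (AHCRel.s_x (⟨k + 1, by omega⟩ : Fin (n - 1)))
    simpa only [map_mul, map_one, map_neg, map_sub, map_add, sE, xE, cE, idxL, idxR] using h
  · have h := ahc_rel (F := F) (n := n) (AHCRel.s_x_comm (⟨k + 1, by omega⟩ : Fin (n - 1)) (⟨k, by omega⟩ : Fin n) (by simp only [idxL, ne_eq, Fin.mk.injEq]; omega) (by simp only [idxR, ne_eq, Fin.mk.injEq]; omega))
    simpa only [map_mul, map_one, map_neg, map_sub, map_add, sE, xE, cE, idxL, idxR] using h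
  · have h := ahc_rel (F := F) (n := n) (AHCRel.s_c1 (⟨k, by omega⟩ : Fin (n - 1)))
    simpa only [map_mul, map_one, map_neg, map_sub, map_add, sE, xE, cE, idxL, idxR] using h
  · have h := ahc_rel (F := F) (n := n) (AHCRel.s_c2 (⟨k, by omega⟩ : Fin (n - 1)))
    simpa only [map_mul, map_one, map_neg, map_sub, map_add, sE, xE, cE, idxL, idxR] using h
  · have h := ahc_rel (F := F) (n := n) (AHCRel.s_c_comm (⟨k, by omega⟩ : Fin (n - 1)) (⟨k + 2, by omega⟩ : Fin n) (by simp only [idxL, ne_eq, Fin.mk.injEq]; omega) (by simp only [idxR, ne_eq, Fin.mk.injEq]; omega))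
    simpa only [map_mul, map_one, map_neg, map_sub, map_add, sE, xE, cE, idxL, idxR] using h
  · have h := ahc_rel (F := F) (n := n) (AHCRel.s_c1 (⟨k + 1, by omega⟩ : Fin (n - 1)))
    simpa only [map_mul, map_one, map_neg, map_sub, map_add, sE, xE, cE, idxL, idxR] using h
  · have h := ahc_rel (F := F) (n := n) (AHCRel.s_c2 (⟨k + 1, by omega⟩ : Fin (n - 1)))
    simpa only [map_mul, map_one, map_neg, map_sub, map_add, sE, xE, cE, idxL, idxR] using h
  · have h := ahc_rel (F := F) (n := n) (AHCRel.s_c_comm (⟨k + 1, by omega⟩ : Fin (n - 1)) (⟨k, by omega⟩ : Fin n) (by simp only [idxL, ne_eq, Fin.mk.injEq]; omega) (by simp only [idxR, ne_eq, Fin.mk.injEq]; omega))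
    simpa only [map_mul, map_one, map_neg, map_sub, map_add, sE, xE, cE, idxL, idxR] using h
  · have h := ahc_rel (F := F) (n := n) (AHCRel.x_c_anti (⟨k, by omega⟩ : Fin n))
    simpa only [map_mul, map_one, map_neg, map_sub, map_add, sE, xE, cE, idxL, idxR] using h
  · have h := ahc_rel (F := F) (n := n) (AHCRel.x_c_anti (⟨k + 1, by omega⟩ : Fin n))
    simpa only [map_mul, map_one, map_neg, map_sub, map_add, sE, xE, cE, idxL, idxR] using h
  · have h := ahc_rel (F := F) (n := n) (AHCRel.x_c_anti (⟨k + 2, by omega⟩ : Fin n))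
    simpa only [map_mul, map_one, map_neg, map_sub, map_add, sE, xE, cE, idxL, idxR] using h
  · have h := ahc_rel (F := F) (n := n) (AHCRel.x_c_comm (⟨k, by omega⟩ : Fin n) (⟨k + 1, by omega⟩ : Fin n) (by simp only [ne_eq, Fin.mk.injEq]; omega))
    simpa only [map_mul, map_one, map_neg, map_sub, map_add, sE, xE, cE, idxL, idxR] using h
  · have h := ahc_rel (F := F) (n := n) (AHCRel.x_c_comm (⟨k, by omega⟩ : Fin n) (⟨k + 2, by omega⟩ : Fin n) (by simp only [ne_eq, Fin.mk.injEq]; omega))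
    simpa only [map_mul, map_one, map_neg, map_sub, map_add, sE, xE, cE, idxL, idxR] using h
  · have h := ahc_rel (F := F) (n := n) (AHCRel.x_c_comm (⟨k + 1, by omega⟩ : Fin n) (⟨k, by omega⟩ : Fin n) (by simp only [ne_eq, Fin.mk.injEq]; omega))
    simpa only [map_mul, map_one, map_neg, map_sub, map_add, sE, xE, cE, idxL, idxR] using h
  · have h := ahc_rel (F := F) (n := n) (AHCRel.x_c_comm (⟨k + 1, by omega⟩ : Fin n) (⟨k + 2, by omega⟩ : Fin n) (by simp only [ne_eq, Fin.mk.injEq]; omega))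
    simpa only [map_mul, map_one, map_neg, map_sub, map_add, sE, xE, cE, idxL, idxR] using h
  · have h := ahc_rel (F := F) (n := n) (AHCRel.x_c_comm (⟨k + 2, by omega⟩ : Fin n) (⟨k, by omega⟩ : Fin n) (by simp only [ne_eq, Fin.mk.injEq]; omega))
    simpa only [map_mul, map_one, map_neg, map_sub, map_add, sE, xE, cE, idxL, idxR] using h
  · have h := ahc_rel (F := F) (n := n) (AHCRel.x_c_comm (⟨k + 2, by omega⟩ : Fin n) (⟨k + 1, by omega⟩ : Fin n) (by simp only [ne_eq, Fin.mk.injEq]; omega))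
    simpa only [map_mul, map_one, map_neg, map_sub, map_add, sE, xE, cE, idxL, idxR] using h
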